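/- Suppose there exists no zero-curvature generalized decorated metric, i.e. no l ∈ ℝ^E with K̃(l) = 0. Then every solution l : [0,∞) → ℝ^E of the extended combinatorial Ricci flow diverges to infinity in subsequence: there exists a sequence t_n → ∞ with ‖l(t_n)‖ → ∞ as n → ∞. -/

import Mathlib

noncomputable section

open Real Set Filter

/-- The generalized Euclidean triangle angle `aᵢ(x)` opposite the side of length `x i`,
for a generalized triangle with (positive) side lengths `x 0, x 1, x 2`:
it is `π` if `x i ≥ x j + x k`, `0` if some other side is at least the sum of the
remaining two, and otherwise the usual Euclidean angle `arccos((xⱼ²+x_k²−xᵢ²)/(2xⱼx_k))`. -/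
noncomputable def genAngle (x : Fin 3 → ℝ) (i : Fin 3) : ℝ :=
  if x (i + 1) + x (i + 2) ≤ x i then Real.pi
  else if x i + x (i + 2) ≤ x (i + 1) ∨ x i + x (i + 1) ≤ x (i + 2) then 0
  else Real.arccos
    ((x (i + 1) ^ 2 + x (i + 2) ^ 2 - x i ^ 2) / (2 * x (i + 1) * x (i + 2)))

/-- The three side lengths `e^{(l₁₂+l₃₄)/2}, e^{(l₁₃+l₂₄)/2}, e^{(l₁₄+l₂₃)/2}` of the
generalized Euclidean triangle associated to a length vector `l ∈ ℝ⁶`.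
Edge indices: `0 ↔ {1,2}, 1 ↔ {1,3}, 2 ↔ {1,4}, 3 ↔ {2,3}, 4 ↔ {2,4}, 5 ↔ {3,4}`,
so opposite pairs of edges are `(0,5), (1,4), (2,3)`. -/
noncomputable def triSides (l : Fin 6 → ℝ) (k : Fin 3) : ℝ :=
  if k.val = 0 then Real.exp ((l 0 + l 5) / 2)
  else if k.val = 1 then Real.exp ((l 1 + l 4) / 2)
  else Real.exp ((l 2 + l 3) / 2)

/-- The quad (pair of opposite edges) containing the edge `p`. -/
def quadIndex (p : Fin 6) : Fin 3 :=
  if p.val = 0 ∨ p.val = 5 then 0 else if p.val = 1 ∨ p.val = 4 then 1 else 2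

/-- The extended dihedral angle `α_p(l)` of the generalized decorated tetrahedron with
length vector `l ∈ ℝ⁶` at the edge `p`. -/
noncomputable def dihedral (l : Fin 6 → ℝ) (p : Fin 6) : ℝ :=
  genAngle (triSides l) (quadIndex p)

/-- The edge index in `Fin 6` of the edge `{i,j}` of the tetrahedron on vertices `Fin 4`
(junk value for `i = j`). -/
def edgeOf (i j : Fin 4) : Fin 6 :=
  if (i.val = 0 ∧ j.val = 1) ∨ (i.val = 1 ∧ j.val = 0) then 0
  else if (i.val = 0 ∧ j.val = 2) ∨ (i.val = 2 ∧ j.val = 0) then 1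
  else if (i.val = 0 ∧ j.val = 3) ∨ (i.val = 3 ∧ j.val = 0) then 2
  else if (i.val = 1 ∧ j.val = 2) ∨ (i.val = 2 ∧ j.val = 1) then 3
  else if (i.val = 1 ∧ j.val = 3) ∨ (i.val = 3 ∧ j.val = 1) then 4
  else 5

/-- The two endpoints of the edge `p` of the tetrahedron. -/
def endPts (p : Fin 6) : Fin 4 × Fin 4 :=
  if p.val = 0 then (0, 1) else if p.val = 1 then (0, 2) else if p.val = 2 then (0, 3)
  else if p.val = 3 then (1, 2) else if p.val = 4 then (1, 3) else (2, 3)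

/-- The Lobachevsky function `Λ(x) = −∫₀ˣ ln|2 sin t| dt`. -/
noncomputable def lob (x : ℝ) : ℝ := -∫ t in (0:ℝ)..x, Real.log |2 * Real.sin t|

/-- The volume of the generalized decorated tetrahedron with length vector `l`. -/
noncomputable def vol6 (l : Fin 6 → ℝ) : ℝ := (1 / 2 : ℝ) * ∑ p : Fin 6, lob (dihedral l p)

/-- The co-volume function `cov(l) = 2 vol(l) + Σ α_p(l) l_p` on `ℝ⁶`. -/
noncomputable def cov6 (l : Fin 6 → ℝ) : ℝ := 2 * vol6 l + ∑ p : Fin 6, dihedral l p * l p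

/-- `𝓛 ⊂ ℝ⁶`: length vectors of genuine decorated ideal hyperbolic tetrahedra, i.e. those
whose associated generalized Euclidean triangle satisfies the strict triangle inequalities. -/
def Ldom : Set (Fin 6 → ℝ) :=
  {l | ∀ i : Fin 3, triSides l i < triSides l (i + 1) + triSides l (i + 2)}

/-- The action of `w ∈ ℝ⁴` on `l ∈ ℝ⁶`: `(w + l)_{ij} = l_{ij} + wᵢ + wⱼ`. -/
def act (w : Fin 4 → ℝ) (l : Fin 6 → ℝ) : Fin 6 → ℝ :=
  fun p => l p + w (endPts p).1 + w (endPts p).2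

/-- `ℝ̂⁴ = {w + 0 : w ∈ ℝ⁴} ⊂ ℝ⁶`. -/
def hatR4 : Set (Fin 6 → ℝ) := {x | ∃ w : Fin 4 → ℝ, x = act w 0}

/-- `i, j, k, h` are pairwise distinct, i.e. `{i,j,k,h} = {1,2,3,4}`. -/
def Distinct4 (i j k h : Fin 4) : Prop :=
  i ≠ j ∧ i ≠ k ∧ i ≠ h ∧ j ≠ k ∧ j ≠ h ∧ k ≠ h

variable {T E : Type*}

/-- The length vector in `ℝ⁶` induced on the tetrahedron `σ` by a metric `l : E → ℝ`. -/
def pullback (glue : T → Fin 6 → E) (l : E → ℝ) (σ : T) : Fin 6 → ℝ :=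
  fun p => l (glue σ p)

/-- The generalized Ricci curvature `K̃_e(l) = 2π − Σ_{σ} Σ_{p : glue σ p = e} α_p(l_σ)`. -/
noncomputable def Ric [Fintype T] [DecidableEq E] (glue : T → Fin 6 → E) (l : E → ℝ)
    (e : E) : ℝ :=
  2 * Real.pi -
    ∑ σ : T, ∑ p : Fin 6, if glue σ p = e then dihedral (pullback glue l σ) p else 0

/-- `𝓛(M,𝒯)`: the set of decorated hyperbolic polyhedral metrics. -/
def LMdom (glue : T → Fin 6 → E) : Set (E → ℝ) := {l | ∀ σ : T, pullback glue l σ ∈ Ldom}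

/-- `H̃(l) = Σ_σ cov(l_σ) − 2π Σ_e l_e`. -/
noncomputable def Htilde [Fintype T] [Fintype E] (glue : T → Fin 6 → E) (l : E → ℝ) : ℝ :=
  ∑ σ : T, cov6 (pullback glue l σ) - 2 * Real.pi * ∑ e : E, l e

/-- The valence `d_e` of an edge `e`: the number of pairs `(σ, p)` glued to `e`. -/
def valence [Fintype T] [DecidableEq E] (glue : T → Fin 6 → E) (e : E) : ℕ :=
  ∑ σ : T, ∑ p : Fin 6, if glue σ p = e then 1 else 0

/-- `(M,𝒯)` is edge-transitive: any edge can be mapped to any other edge by an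
automorphism of the triangulation. -/
def EdgeTransitive (glue : T → Fin 6 → E) : Prop :=
  ∀ e e' : E, ∃ (φ : T ≃ T) (ψ : E ≃ E) (ρ : T → Fin 4 ≃ Fin 4),
    (∀ (σ : T) (i j : Fin 4), i ≠ j →
      glue (φ σ) (edgeOf (ρ σ i) (ρ σ j)) = ψ (glue σ (edgeOf i j))) ∧ ψ e = e'

/-!
The curvature vector field is dissipative: along the variation of a generalized triangle, the
angles depend monotonically on the logarithms of the side lengths. For nondegenerate triangles the
law of sines says that, up to a common constant, the log-lengths are `log (sin Aᵢ)`, whose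
derivative in the angles is the quadratic form `∑ pᵢ² cot Aᵢ`, nonnegative on `∑ pᵢ = 0`.
A nondegenerate triangle is compared with a degenerate one through `log t ≤ t - 1` and the concavity
of the sine.

Dissipativity alone does not make a bounded orbit converge (rotations of the plane are
dissipative), but a limit point `w` of its time averages satisfies `⟪F y, w - y⟫ ≥ 0` for all `y`,
and Minty's trick turns this into `F w = 0`.
-/

/-- A vector field on an inner product space is dissipative if `-F` is monotone in the sense of
Minty and Browder; its flow is then distance-nonincreasing. -/
def IsDissipative {V : Type*} [NormedAddCommGroup V] [InnerProductSpace ℝ V] (F : V → V) : Prop :=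
  ∀ x y, inner ℝ (F x - F y) (x - y) ≤ 0

lemma norm_intervalAverage_le {V : Type*} [NormedAddCommGroup V] [NormedSpace ℝ V] {f : ℝ → V}
    {a b C : ℝ} (hab : a < b) (hf : ∀ t ∈ Ioc a b, ‖f t‖ ≤ C) : ‖⨍ t in a..b, f t‖ ≤ C := by
  have hint : ‖∫ t in a..b, f t‖ ≤ C * |b - a| :=
    intervalIntegral.norm_integral_le_of_norm_le_const (by rwa [uIoc_of_le hab.le])
  have hlen : 0 < b - a := sub_pos.2 hab
  rw [interval_average_eq, norm_smul, norm_inv, Real.norm_of_nonneg hlen.le,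
    inv_mul_le_iff₀ hlen, mul_comm]
  rwa [abs_of_pos hlen] at hint

lemma exists_seq_tendsto_atTop_of_frequently_le {α β : Type*} [Preorder β] [IsDirectedOrder β]
    [Nonempty β] [(atTop : Filter β).IsCountablyGenerated] {u : Filter α}
    [u.IsCountablyGenerated] {f : α → β} (hf : ∀ C, ∃ᶠ a in u, C ≤ f a) :
    ∃ x : ℕ → α, Tendsto x atTop u ∧ Tendsto (fun n => f (x n)) atTop atTop := by
  have hne : (comap f atTop ⊓ u).NeBot := (atTop_basis.comap f).inf_neBot_iff.2
    fun {C} _ {_} hs => ((hf C).and_eventually hs).exists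
  obtain ⟨x, hx⟩ := exists_seq_tendsto (comap f atTop ⊓ u)
  exact ⟨x, (tendsto_inf.1 hx).2, tendsto_comap_iff.1 (tendsto_inf.1 hx).1⟩

section Dissipative

variable {V : Type*} [NormedAddCommGroup V] [InnerProductSpace ℝ V] {F : V → V}

-- Minty's trick: test against `y = w + s • F w` and let `s ↓ 0`.
lemma eq_zero_of_forall_inner_sub_nonneg (hF : Continuous F) {w : V}
    (hw : ∀ y, 0 ≤ inner ℝ (F y) (w - y)) : F w = 0 := by
  have hle : ∀ s : ℝ, 0 < s → inner ℝ (F (w + s • F w)) (F w) ≤ 0 := by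
    intro s hs
    have h := hw (w + s • F w)
    rw [sub_add_cancel_left, inner_neg_right, real_inner_smul_right] at h
    nlinarith
  have hcont : Continuous fun s : ℝ => inner ℝ (F (w + s • F w)) (F w) := by fun_prop
  have hlim : Tendsto (fun s : ℝ => inner ℝ (F (w + s • F w)) (F w)) (nhdsWithin 0 (Ioi 0))
      (nhds (inner ℝ (F w) (F w))) := by
    simpa using (hcont.tendsto 0).mono_left nhdsWithin_le_nhds
  have hself : inner ℝ (F w) (F w) ≤ 0 :=
    le_of_tendsto hlim (eventually_mem_nhdsWithin.mono hle)
  exact real_inner_self_nonpos.1 hself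

lemma IsDissipative.neg_le_inner_average_sub [CompleteSpace V] (hF : IsDissipative F) {l : ℝ → V}
    {a b : ℝ} (hab : a < b) (hl : ∀ t ∈ Icc a b, HasDerivAt l (F (l t)) t) (y : V) :
    -(‖l a - y‖ ^ 2 / (2 * (b - a))) ≤ inner ℝ (F y) ((⨍ t in a..b, l t) - y) := by
  have hcont : ContinuousOn l (Icc a b) := HasDerivAt.continuousOn hl
  have hint : IntervalIntegrable l MeasureTheory.volume a b :=
    hcont.intervalIntegrable_of_Icc hab.le
  have hderiv : ∀ t ∈ Icc a b,
      HasDerivAt (fun t => ‖l t - y‖ ^ 2) (2 * inner ℝ (l t - y) (F (l t))) t :=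
    fun t ht => ((hl t ht).sub_const y).norm_sq
  have hle : ∀ t, 2 * inner ℝ (l t - y) (F (l t)) ≤ 2 * inner ℝ (F y) (l t - y) := by
    intro t
    have h := hF (l t) y
    rw [inner_sub_left] at h
    rw [real_inner_comm]
    linarith
  have hgrowth : ‖l b - y‖ ^ 2 - ‖l a - y‖ ^ 2 ≤ ∫ t in a..b, 2 * inner ℝ (F y) (l t - y) :=
    intervalIntegral.sub_le_integral_of_hasDeriv_right_of_le hab.le
      (HasDerivAt.continuousOn hderiv)
      (fun t ht => (hderiv t (Ioo_subset_Icc_self ht)).hasDerivWithinAt)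
      (ContinuousOn.integrableOn_Icc (by fun_prop)) (fun t _ => hle t)
  have hlen : 0 < b - a := sub_pos.2 hab
  have hintegral : ∫ t in a..b, 2 * inner ℝ (F y) (l t - y) =
      2 * (b - a) * inner ℝ (F y) ((⨍ t in a..b, l t) - y) := by
    have hcomm := (innerSL ℝ (F y)).intervalIntegral_comp_comm
      (hint.sub (intervalIntegrable_const (c := y)))
    simp only [innerSL_apply_apply] at hcomm
    have havg : (∫ t in a..b, l t - y) = (b - a) • ((⨍ t in a..b, l t) - y) := by
      rw [intervalIntegral.integral_sub hint intervalIntegrable_const,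
        intervalIntegral.integral_const, interval_average_eq, smul_sub, smul_inv_smul₀ hlen.ne']
    rw [intervalIntegral.integral_const_mul, hcomm, havg, real_inner_smul_right, mul_assoc]
  rw [hintegral] at hgrowth
  rw [← neg_div, div_le_iff₀ (by positivity)]
  linarith [sq_nonneg ‖l b - y‖]

theorem IsDissipative.exists_eq_zero_of_bounded_flow [FiniteDimensional ℝ V]
    (hF : IsDissipative F) (hcont : Continuous F) {l : ℝ → V} {a C : ℝ}
    (hl : ∀ t, a ≤ t → HasDerivAt l (F (l t)) t) (hC : ∀ t, a ≤ t → ‖l t‖ ≤ C) :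
    ∃ w, F w = 0 := by
  have : ProperSpace V := FiniteDimensional.proper_real V
  let avg : ℕ → V := fun n => ⨍ t in a..a + (n + 1), l t
  have hlt : ∀ n : ℕ, a < a + (n + 1) := fun n => by linarith [n.cast_nonneg (α := ℝ)]
  have havg : ∀ n, avg n ∈ Metric.closedBall 0 C := fun n =>
    mem_closedBall_zero_iff.2 (norm_intervalAverage_le (hlt n) fun t ht => hC t ht.1.le)
  obtain ⟨w, -, φ, hφ, hlim⟩ := (isCompact_closedBall (0 : V) C).tendsto_subseq havg
  refine ⟨w, eq_zero_of_forall_inner_sub_nonneg hcont fun y => ?_⟩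
  have hlower : ∀ n : ℕ, -(‖l a - y‖ ^ 2 / (2 * (n + 1))) ≤ inner ℝ (F y) (avg n - y) := by
    intro n
    have h := hF.neg_le_inner_average_sub (hlt n) (fun t ht => hl t ht.1) y
    rwa [add_sub_cancel_left] at h
  have hzero : Tendsto (fun n : ℕ => -(‖l a - y‖ ^ 2 / (2 * ((n : ℝ) + 1)))) atTop (nhds 0) := by
    rw [← neg_zero]
    exact (tendsto_const_nhds.div_atTop ((tendsto_natCast_atTop_atTop.atTop_add
      tendsto_const_nhds).const_mul_atTop two_pos)).neg
  exact le_of_tendsto_of_tendsto' (hzero.comp hφ.tendsto_atTop)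
    (tendsto_const_nhds.inner (hlim.sub_const y)) fun n => hlower (φ n)

end Dissipative

lemma fin_three_eq_or (i j : Fin 3) : j = i ∨ j = i + 1 ∨ j = i + 2 := by
  decide +revert

lemma sum_fin_three_eq_add_add (f : Fin 3 → ℝ) (i : Fin 3) :
    ∑ j, f j = f i + f (i + 1) + f (i + 2) := by
  rw [Fin.sum_univ_three]
  fin_cases i
  · rfl
  · exact add_rotate ..
  · exact (add_rotate ..).symm

/-- The strict triangle inequalities: `x` lists the side lengths of a nondegenerate Euclidean
triangle (in particular they are positive, see `IsTriangle.pos`). -/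
def IsTriangle (x : Fin 3 → ℝ) : Prop :=
  ∀ i, x i < x (i + 1) + x (i + 2)

lemma genAngle_eq_single {x : Fin 3 → ℝ} (hx : ∀ i, 0 < x i) {i : Fin 3}
    (h : x (i + 1) + x (i + 2) ≤ x i) : genAngle x = Pi.single i π := by
  have h1 := hx (i + 1)
  have h2 := hx (i + 2)
  have h11 : i + 1 + 1 = i + 2 := add_assoc ..
  have h12 : i + 1 + 2 = i := (add_assoc ..).trans (add_zero i)
  have h21 : i + 2 + 1 = i := (add_assoc ..).trans (add_zero i)
  have h22 : i + 2 + 2 = i + 1 := add_assoc ..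
  funext j
  obtain rfl | rfl | rfl := fin_three_eq_or i j
  · rw [Pi.single_eq_same, genAngle, if_pos h]
  · rw [Pi.single_eq_of_ne (by simp), genAngle, h11, h12, if_neg (by linarith),
      if_pos (Or.inr (by linarith))]
  · rw [Pi.single_eq_of_ne (by simp), genAngle, h21, h22, if_neg (by linarith),
      if_pos (Or.inl (by linarith))]

lemma genAngle_eq_arccos {x : Fin 3 → ℝ} (hx : ∀ i, 0 < x i) (i : Fin 3) :
    genAngle x i =
      arccos ((x (i + 1) ^ 2 + x (i + 2) ^ 2 - x i ^ 2) / (2 * x (i + 1) * x (i + 2))) := by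
  have h0 := hx i
  have h1 := hx (i + 1)
  have h2 := hx (i + 2)
  unfold genAngle
  split_ifs with hπ hzero
  · refine (arccos_of_le_neg_one ?_).symm
    rw [div_le_iff₀ (by positivity)]
    nlinarith
  · refine (arccos_of_one_le ?_).symm
    rw [le_div_iff₀ (by positivity)]
    rcases hzero with h | h <;> nlinarith
  · rfl

namespace IsTriangle

open scoped EuclideanGeometry

variable {x y : Fin 3 → ℝ}

lemma lt_add (hx : IsTriangle x) (i : Fin 3) :
    x (i + 1) < x i + x (i + 2) ∧ x (i + 2) < x i + x (i + 1) := by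
  have h1 := hx (i + 1)
  have h2 := hx (i + 2)
  fin_cases i <;> exact ⟨h1.trans_eq (add_comm ..), h2⟩

lemma pos (hx : IsTriangle x) (i : Fin 3) : 0 < x i := by
  linarith [(hx.lt_add i).1, (hx.lt_add i).2]

lemma exists_dist_eq (hx : IsTriangle x) :
    ∃ p : Fin 3 → ℂ, ∀ i, dist (p (i + 1)) (p (i + 2)) = x i := by
  have h0 := hx.pos 0
  have h1 := hx.pos 1
  have h2 := hx.pos 2
  have ht0 : x 0 < x 1 + x 2 := hx 0
  have ht1 : x 1 < x 2 + x 0 := hx 1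
  have ht2 : x 2 < x 0 + x 1 := hx 2
  set α := arccos ((x 1 ^ 2 + x 2 ^ 2 - x 0 ^ 2) / (2 * x 1 * x 2))
  have hα : cos α = (x 1 ^ 2 + x 2 ^ 2 - x 0 ^ 2) / (2 * x 1 * x 2) := by
    refine cos_arccos ?_ ?_
    · rw [le_div_iff₀ (by positivity)]
      nlinarith
    · rw [div_le_iff₀ (by positivity)]
      nlinarith
  have hside : (x 2 - x 1 * cos α) ^ 2 + (0 - x 1 * sin α) ^ 2 = x 0 ^ 2 := by
    have : 2 * x 1 * x 2 * cos α = x 1 ^ 2 + x 2 ^ 2 - x 0 ^ 2 := by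
      rw [hα]
      field_simp
    linear_combination x 1 ^ 2 * sin_sq_add_cos_sq α - this
  have hradius : (x 1 * cos α - 0) ^ 2 + (x 1 * sin α - 0) ^ 2 = x 1 ^ 2 := by
    linear_combination x 1 ^ 2 * sin_sq_add_cos_sq α
  refine ⟨![⟨0, 0⟩, ⟨x 2, 0⟩, ⟨x 1 * cos α, x 1 * sin α⟩], fun i => ?_⟩
  fin_cases i
  · exact (Complex.dist_mk ..).trans ((congrArg sqrt hside).trans (sqrt_sq h0.le))
  · exact (Complex.dist_mk ..).trans ((congrArg sqrt hradius).trans (sqrt_sq h1.le))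
  · exact (Complex.dist_mk ..).trans (by simp [h2.le])

lemma genAngle_eq_angle (hx : IsTriangle x) {p : Fin 3 → ℂ}
    (hp : ∀ i, dist (p (i + 1)) (p (i + 2)) = x i) (i : Fin 3) :
    genAngle x i = ∠ (p (i + 1)) (p i) (p (i + 2)) := by
  have h1 := hx.pos (i + 1)
  have h2 := hx.pos (i + 2)
  have hd1 : dist (p (i + 1)) (p i) = x (i + 2) := by
    rw [← hp (i + 2), dist_comm]
    fin_cases i <;> rfl
  have hd2 : dist (p (i + 2)) (p i) = x (i + 1) := by
    rw [← hp (i + 1)]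
    fin_cases i <;> rfl
  have hcos := EuclideanGeometry.law_cos (p (i + 1)) (p i) (p (i + 2))
  rw [hp, hd1, hd2] at hcos
  rw [genAngle_eq_arccos hx.pos, ← arccos_cos (EuclideanGeometry.angle_nonneg _ _ _)
    (EuclideanGeometry.angle_le_pi (p (i + 1)) (p i) (p (i + 2)))]
  congr 1
  rw [div_eq_iff (by positivity)]
  linarith

lemma sum_genAngle (hx : IsTriangle x) : ∑ i, genAngle x i = π := by
  obtain ⟨p, hp⟩ := hx.exists_dist_eq
  have hne : p 0 ≠ p 1 := dist_pos.1 ((hx.pos 2).trans_eq (hp 2).symm)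
  have hsum : ∠ (p 1) (p 0) (p 2) + ∠ (p 0) (p 2) (p 1) + ∠ (p 2) (p 1) (p 0) = π :=
    EuclideanGeometry.angle_add_angle_add_angle_eq_pi (p 2) hne
  have h0 : genAngle x 0 = ∠ (p 1) (p 0) (p 2) := hx.genAngle_eq_angle hp 0
  have h1 : genAngle x 1 = ∠ (p 2) (p 1) (p 0) := hx.genAngle_eq_angle hp 1
  have h2 : genAngle x 2 = ∠ (p 0) (p 2) (p 1) := hx.genAngle_eq_angle hp 2
  rw [Fin.sum_univ_three, h0, h1, h2]
  linarith

lemma sin_genAngle_mul (hx : IsTriangle x) (i j : Fin 3) :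
    sin (genAngle x i) * x j = sin (genAngle x j) * x i := by
  obtain ⟨p, hp⟩ := hx.exists_dist_eq
  have hsucc : ∀ k, sin (genAngle x k) * x (k + 1) = sin (genAngle x (k + 1)) * x k := by
    intro k
    have hlaw := EuclideanGeometry.law_sin (p (k + 1)) (p k) (p (k + 2))
    have hk : k + 1 + 2 = k := (add_assoc ..).trans (add_zero k)
    have hk' : k + 1 + 1 = k + 2 := add_assoc ..
    rw [hx.genAngle_eq_angle hp k, hx.genAngle_eq_angle hp (k + 1), hk, hk', ← hp (k + 1), hk, hk',
      ← hp k, dist_comm (p (k + 1))]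
    rwa [dist_comm (p k)] at hlaw
  obtain rfl | rfl | rfl := fin_three_eq_or i j
  · rfl
  · exact hsucc i
  · have hcycle : i + 2 + 1 = i := (add_assoc ..).trans (add_zero i)
    simpa only [hcycle] using (hsucc (i + 2)).symm

lemma genAngle_pos (hx : IsTriangle x) (i : Fin 3) : 0 < genAngle x i := by
  have h1 := hx.pos (i + 1)
  have h2 := hx.pos (i + 2)
  have ht := hx.lt_add i
  rw [genAngle_eq_arccos hx.pos, arccos_pos, div_lt_one (by positivity)]
  nlinarith

end IsTriangle

/-- The angle triples of nondegenerate Euclidean triangles. -/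
def angleSimplex : Set (Fin 3 → ℝ) :=
  {A | (∀ i, 0 < A i) ∧ ∑ i, A i = π}

lemma convex_angleSimplex : Convex ℝ angleSimplex := by
  intro A hA B hB a b ha hb hab
  refine ⟨fun i => convex_Ioi (0 : ℝ) (hA.1 i) (hB.1 i) ha hb hab, ?_⟩
  simp only [Pi.add_apply, Pi.smul_apply, smul_eq_mul, Finset.sum_add_distrib, ← Finset.mul_sum,
    hA.2, hB.2]
  rw [← add_mul, hab, one_mul]

lemma add_lt_pi_of_mem_angleSimplex {A : Fin 3 → ℝ} (hA : A ∈ angleSimplex) {i j : Fin 3}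
    (hij : i ≠ j) : A i + A j < π := by
  have hsum := hA.2
  rw [sum_fin_three_eq_add_add A i] at hsum
  obtain rfl | rfl | rfl := fin_three_eq_or i j
  · exact absurd rfl hij
  · linarith [hA.1 (i + 2)]
  · linarith [hA.1 (i + 1)]

lemma sin_pos_of_mem_angleSimplex {A : Fin 3 → ℝ} (hA : A ∈ angleSimplex) (i : Fin 3) :
    0 < sin (A i) := by
  have hne : i ≠ i + 1 := by simp
  exact sin_pos_of_pos_of_lt_pi (hA.1 i)
    (by linarith [hA.1 (i + 1), add_lt_pi_of_mem_angleSimplex hA hne])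

lemma sum_sq_mul_cot_nonneg {A p : Fin 3 → ℝ} (hA : A ∈ angleSimplex) (hp : ∑ i, p i = 0) :
    0 ≤ ∑ i, p i ^ 2 * cot (A i) := by
  have h0 := sin_pos_of_mem_angleSimplex hA 0
  have h1 := sin_pos_of_mem_angleSimplex hA 1
  have h2 := sin_pos_of_mem_angleSimplex hA 2
  have hsum := hA.2
  rw [Fin.sum_univ_three] at hp hsum
  have hp2 : p 2 = -(p 0 + p 1) := by linarith
  have hA2 : A 2 = π - (A 0 + A 1) := by linarith
  have hcos : cos (A 2) = sin (A 0) * sin (A 1) - cos (A 0) * cos (A 1) := by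
    rw [hA2, cos_pi_sub, cos_add, neg_sub]
  have hsin : sin (A 2) = sin (A 0) * cos (A 1) + cos (A 0) * sin (A 1) := by
    rw [hA2, sin_pi_sub, sin_add]
  have hsquares : ∑ i, p i ^ 2 * cot (A i) =
      ((cos (A 0) * sin (A 1) * p 0 - cos (A 1) * sin (A 0) * p 1) ^ 2 +
        (sin (A 0) * sin (A 1) * (p 0 + p 1)) ^ 2) / (sin (A 0) * sin (A 1) * sin (A 2)) := by
    simp only [Fin.sum_univ_three, cot_eq_cos_div_sin, hp2, hcos]
    field_simp
    rw [hsin]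
    ring
  rw [hsquares]
  positivity

lemma sum_sub_mul_log_sin_sub_nonneg {A B : Fin 3 → ℝ} (hA : A ∈ angleSimplex)
    (hB : B ∈ angleSimplex) :
    0 ≤ ∑ i, (A i - B i) * (log (sin (A i)) - log (sin (B i))) := by
  let γ : ℝ → Fin 3 → ℝ := fun s => B + s • (A - B)
  have hγ : ∀ s ∈ Icc (0 : ℝ) 1, γ s ∈ angleSimplex := fun s hs =>
    convex_angleSimplex.add_smul_sub_mem hB hA hs
  have hderiv : ∀ s ∈ Icc (0 : ℝ) 1,
      HasDerivAt (fun s => ∑ i, (A i - B i) * log (sin (γ s i)))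
        (∑ i, (A i - B i) ^ 2 * cot (γ s i)) s := by
    intro s hs
    refine HasDerivAt.fun_sum fun i _ => ?_
    have hline : HasDerivAt (fun s => γ s i) (A i - B i) s := by
      simpa [γ] using ((hasDerivAt_id s).mul_const (A i - B i)).const_add (B i)
    have hlog := hline.sin.log (sin_pos_of_mem_angleSimplex (hγ s hs) i).ne'
    refine (hlog.const_mul (A i - B i)).congr_deriv ?_
    rw [cot_eq_cos_div_sin]
    ring
  obtain ⟨s, hs, hslope⟩ := exists_hasDerivAt_eq_slope _ _ zero_lt_one
    (HasDerivAt.continuousOn hderiv) fun s hs => hderiv s (Ioo_subset_Icc_self hs)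
  have hdir : ∑ i, (A i - B i) = 0 := by
    rw [Finset.sum_sub_distrib, hA.2, hB.2, sub_self]
  have hnonneg := sum_sq_mul_cot_nonneg (hγ s (Ioo_subset_Icc_self hs)) hdir
  rw [hslope] at hnonneg
  simpa [γ, mul_sub] using hnonneg

lemma mul_sin_le_mul_sin {a b : ℝ} (ha : 0 ≤ a) (hab : a ≤ b) (hb : b ≤ π) :
    a * sin b ≤ b * sin a := by
  rcases (ha.trans hab).eq_or_lt with rfl | hb0
  · simp [le_antisymm hab ha]
  have hconcave := strictConcaveOn_sin_Icc.concaveOn.2 (left_mem_Icc.2 pi_pos.le) ⟨hb0.le, hb⟩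
    (sub_nonneg.2 ((div_le_one hb0).2 hab)) (div_nonneg ha hb0.le) (sub_add_cancel 1 (a / b))
  simp only [smul_eq_mul, sin_zero, mul_zero, zero_add, div_mul_cancel₀ _ hb0.ne',
    div_mul_eq_mul_div] at hconcave
  rwa [div_le_iff₀ hb0, mul_comm (sin a)] at hconcave

namespace IsTriangle

variable {x y : Fin 3 → ℝ}

lemma genAngle_mem_angleSimplex (hx : IsTriangle x) : genAngle x ∈ angleSimplex :=
  ⟨hx.genAngle_pos, hx.sum_genAngle⟩

lemma exists_log_sin_genAngle (hx : IsTriangle x) :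
    ∃ c, ∀ i, log (sin (genAngle x i)) = log (x i) + c := by
  have hsin := sin_pos_of_mem_angleSimplex hx.genAngle_mem_angleSimplex
  refine ⟨log (sin (genAngle x 0)) - log (x 0), fun i => ?_⟩
  have hlog := congrArg log (hx.sin_genAngle_mul i 0)
  rw [log_mul (hsin i).ne' (hx.pos 0).ne', log_mul (hsin 0).ne' (hx.pos i).ne'] at hlog
  linarith

lemma sum_genAngle_sub_mul_log_sub_nonneg (hx : IsTriangle x) (hy : IsTriangle y) :
    0 ≤ ∑ i, (genAngle x i - genAngle y i) * (log (x i) - log (y i)) := by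
  obtain ⟨c, hc⟩ := hx.exists_log_sin_genAngle
  obtain ⟨d, hd⟩ := hy.exists_log_sin_genAngle
  have hsin := sum_sub_mul_log_sin_sub_nonneg hx.genAngle_mem_angleSimplex
    hy.genAngle_mem_angleSimplex
  have hshift : ∑ i, (genAngle x i - genAngle y i) * (c - d) = 0 := by
    rw [← Finset.sum_mul, Finset.sum_sub_distrib, hx.sum_genAngle, hy.sum_genAngle, sub_self,
      zero_mul]
  have hsplit : ∑ i, (genAngle x i - genAngle y i) * (log (sin (genAngle x i)) -
        log (sin (genAngle y i))) =
      ∑ i, (genAngle x i - genAngle y i) * (log (x i) - log (y i)) +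
        ∑ i, (genAngle x i - genAngle y i) * (c - d) := by
    rw [← Finset.sum_add_distrib]
    refine Finset.sum_congr rfl fun i _ => ?_
    rw [hc, hd]
    ring
  rwa [hsplit, hshift, add_zero] at hsin

lemma genAngle_mul_le (hx : IsTriangle x) {i j : Fin 3} (hij : i ≠ j) :
    genAngle x j * x i ≤ (π - genAngle x i) * x j := by
  have hmem := hx.genAngle_mem_angleSimplex
  have hsin := sin_pos_of_mem_angleSimplex hmem j
  have hratio : genAngle x j * sin (genAngle x i) ≤ (π - genAngle x i) * sin (genAngle x j) := by
    rw [← sin_pi_sub (genAngle x i)]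
    exact mul_sin_le_mul_sin (hx.genAngle_pos j).le
      (by linarith [add_lt_pi_of_mem_angleSimplex hmem hij]) (by linarith [hx.genAngle_pos i])
  refine le_of_mul_le_mul_left ?_ hsin
  calc sin (genAngle x j) * (genAngle x j * x i)
      = genAngle x j * sin (genAngle x i) * x j := by
        linear_combination -genAngle x j * hx.sin_genAngle_mul i j
    _ ≤ (π - genAngle x i) * sin (genAngle x j) * x j :=
        mul_le_mul_of_nonneg_right hratio (hx.pos j).le
    _ = sin (genAngle x j) * ((π - genAngle x i) * x j) := by ring

lemma genAngle_mul_log_sub_log_le (hy : IsTriangle y) (hx : ∀ i, 0 < x i) {i j : Fin 3}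
    (hij : i ≠ j) :
    genAngle y j * ((log (x j) - log (y j)) - (log (x i) - log (y i))) ≤
      (π - genAngle y i) * (x j / x i) - genAngle y j := by
  have hxi := hx i
  have hxj := hx j
  have hyi := hy.pos i
  have hyj := hy.pos j
  have hlog : log (x j) - log (y j) - (log (x i) - log (y i)) ≤ x j / y j / (x i / y i) - 1 := by
    rw [← log_div hxj.ne' hyj.ne', ← log_div hxi.ne' hyi.ne', ← log_div (by positivity)
      (by positivity)]
    exact log_le_sub_one_of_pos (by positivity)
  have hangle : genAngle y j * (x j / y j / (x i / y i)) ≤ (π - genAngle y i) * (x j / x i) :=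
    calc genAngle y j * (x j / y j / (x i / y i))
        = genAngle y j * y i / y j * (x j / x i) := by field_simp
      _ ≤ (π - genAngle y i) * (x j / x i) := by
        gcongr
        exact (div_le_iff₀ hyj).2 (hy.genAngle_mul_le hij)
  linarith [mul_le_mul_of_nonneg_left hlog (hy.genAngle_pos j).le]

end IsTriangle

lemma sum_genAngle_sub_mul_log_sub_nonneg_of_isTriangle_right {x y : Fin 3 → ℝ}
    (hx : ∀ i, 0 < x i) {i : Fin 3} (hi : x (i + 1) + x (i + 2) ≤ x i) (hy : IsTriangle y) :
    0 ≤ ∑ j, (genAngle x j - genAngle y j) * (log (x j) - log (y j)) := by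
  have hsum := hy.sum_genAngle
  rw [sum_fin_three_eq_add_add _ i] at hsum ⊢
  have hsides : x (i + 1) / x i + x (i + 2) / x i ≤ 1 := by
    rw [← add_div]
    exact (div_le_one (hx i)).2 hi
  have hbound := mul_le_mul_of_nonneg_left hsides
    (by linarith [hy.genAngle_pos (i + 1), hy.genAngle_pos (i + 2)] : 0 ≤ π - genAngle y i)
  rw [genAngle_eq_single hx hi]
  simp only [Pi.single_eq_same, Pi.single_eq_of_ne (show i + 1 ≠ i by simp),
    Pi.single_eq_of_ne (show i + 2 ≠ i by simp)]
  have hsucc := hy.genAngle_mul_log_sub_log_le hx (i := i) (j := i + 1) (by simp)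
  have hpred := hy.genAngle_mul_log_sub_log_le hx (i := i) (j := i + 2) (by simp)
  linear_combination hsucc + hpred + hbound + (log (x i) - log (y i)) * hsum - hsum

lemma sum_genAngle_sub_mul_log_sub_nonneg_of_degenerate {x y : Fin 3 → ℝ}
    (hx : ∀ i, 0 < x i) (hy : ∀ i, 0 < y i) {i j : Fin 3} (hi : x (i + 1) + x (i + 2) ≤ x i)
    (hj : y (j + 1) + y (j + 2) ≤ y j) :
    0 ≤ ∑ k, (genAngle x k - genAngle y k) * (log (x k) - log (y k)) := by
  have hlongest : ∀ {z : Fin 3 → ℝ}, (∀ k, 0 < z k) → ∀ {k : Fin 3},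
      z (k + 1) + z (k + 2) ≤ z k → ∀ m, log (z m) ≤ log (z k) := by
    intro z hz k hk m
    refine log_le_log (hz m) ?_
    obtain rfl | rfl | rfl := fin_three_eq_or k m
    · exact le_rfl
    · linarith [hz (k + 2)]
    · linarith [hz (k + 1)]
  have hxij := hlongest hx hi j
  have hyij := hlongest hy hj i
  simp only [genAngle_eq_single hx hi, genAngle_eq_single hy hj, sub_mul, Finset.sum_sub_distrib,
    Pi.single_apply, ite_mul, zero_mul, Finset.sum_ite_eq',
    Finset.mem_univ, if_true]
  nlinarith [pi_pos]

theorem sum_genAngle_sub_mul_log_sub_nonneg {x y : Fin 3 → ℝ} (hx : ∀ i, 0 < x i)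
    (hy : ∀ i, 0 < y i) : 0 ≤ ∑ i, (genAngle x i - genAngle y i) * (log (x i) - log (y i)) := by
  by_cases hxt : IsTriangle x <;> by_cases hyt : IsTriangle y
  · exact hxt.sum_genAngle_sub_mul_log_sub_nonneg hyt
  · obtain ⟨j, hj⟩ : ∃ j, y (j + 1) + y (j + 2) ≤ y j := by simpa [IsTriangle] using hyt
    have h := sum_genAngle_sub_mul_log_sub_nonneg_of_isTriangle_right hy hj hxt
    exact h.trans_eq (Finset.sum_congr rfl fun i _ => by ring)
  · obtain ⟨i, hi⟩ : ∃ i, x (i + 1) + x (i + 2) ≤ x i := by simpa [IsTriangle] using hxt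
    exact sum_genAngle_sub_mul_log_sub_nonneg_of_isTriangle_right hx hi hyt
  · obtain ⟨i, hi⟩ : ∃ i, x (i + 1) + x (i + 2) ≤ x i := by simpa [IsTriangle] using hxt
    obtain ⟨j, hj⟩ : ∃ j, y (j + 1) + y (j + 2) ≤ y j := by simpa [IsTriangle] using hyt
    exact sum_genAngle_sub_mul_log_sub_nonneg_of_degenerate hx hy hi hj

lemma triSides_pos (l : Fin 6 → ℝ) (k : Fin 3) : 0 < triSides l k := by
  unfold triSides
  split_ifs <;> exact exp_pos _

lemma sum_quadIndex_mul (f : Fin 3 → ℝ) (l : Fin 6 → ℝ) :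
    ∑ p, f (quadIndex p) * l p = 2 * ∑ k, f k * log (triSides l k) := by
  have h0 : log (triSides l 0) = (l 0 + l 5) / 2 := log_exp _
  have h1 : log (triSides l 1) = (l 1 + l 4) / 2 := log_exp _
  have h2 : log (triSides l 2) = (l 2 + l 3) / 2 := log_exp _
  rw [Fin.sum_univ_six, Fin.sum_univ_three, h0, h1, h2]
  change f 0 * l 0 + f 1 * l 1 + f 2 * l 2 + f 2 * l 3 + f 1 * l 4 + f 0 * l 5 = _
  ring

lemma sum_dihedral_sub_mul_sub_nonneg (l m : Fin 6 → ℝ) :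
    0 ≤ ∑ p, (dihedral l p - dihedral m p) * (l p - m p) := by
  have hl := triSides_pos l
  have hm := triSides_pos m
  have h := sum_genAngle_sub_mul_log_sub_nonneg hl hm
  let f : Fin 3 → ℝ := fun k => genAngle (triSides l) k - genAngle (triSides m) k
  calc (0 : ℝ) ≤ 2 * ∑ k, f k * (log (triSides l k) - log (triSides m k)) := by positivity
    _ = ∑ p, f (quadIndex p) * (l p - m p) := by
      simp only [mul_sub, Finset.sum_sub_distrib, sum_quadIndex_mul]

lemma continuous_dihedral (p : Fin 6) : Continuous fun l : Fin 6 → ℝ => dihedral l p := by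
  have hsides : ∀ k, Continuous fun l : Fin 6 → ℝ => triSides l k := by
    intro k
    unfold triSides
    split_ifs <;> fun_prop
  simp only [dihedral, genAngle_eq_arccos (triSides_pos _)]
  refine continuous_arccos.comp (Continuous.div (by fun_prop) (by fun_prop) fun l => ?_)
  have h1 := triSides_pos l (quadIndex p + 1)
  have h2 := triSides_pos l (quadIndex p + 2)
  positivity

section Ricci

variable [Fintype T] [DecidableEq E]

lemma continuous_Ric (glue : T → Fin 6 → E) : Continuous (Ric glue) := by
  refine continuous_pi fun e => continuous_const.sub <|
    continuous_finsetSum _ fun σ _ => continuous_finsetSum _ fun p _ => ?_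
  split_ifs
  · exact (continuous_dihedral p).comp (by unfold pullback; fun_prop)
  · exact continuous_const

/-- The Ricci curvature as a vector field on Euclidean space `ℝ^E`; the function type `E → ℝ`
itself carries the sup norm, which has no inner product. -/
def ricciField (glue : T → Fin 6 → E) (x : EuclideanSpace ℝ E) : EuclideanSpace ℝ E :=
  WithLp.toLp 2 (Ric glue x.ofLp)

lemma continuous_ricciField (glue : T → Fin 6 → E) : Continuous (ricciField glue) :=
  (PiLp.continuous_toLp 2 _).comp ((continuous_Ric glue).comp (PiLp.continuous_ofLp 2 _))

variable [Fintype E]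

lemma sum_Ric_mul (glue : T → Fin 6 → E) (l v : E → ℝ) :
    ∑ e, Ric glue l e * v e =
      2 * π * ∑ e, v e - ∑ σ, ∑ p, dihedral (pullback glue l σ) p * pullback glue v σ p := by
  simp only [Ric, sub_mul, Finset.sum_sub_distrib, ← Finset.mul_sum, Finset.sum_mul]
  congr 1
  rw [Finset.sum_comm]
  refine Finset.sum_congr rfl fun σ _ => ?_
  rw [Finset.sum_comm]
  simp [ite_mul, pullback]

lemma isDissipative_ricciField (glue : T → Fin 6 → E) : IsDissipative (ricciField glue) := by
  intro x y
  have hinner : inner ℝ (ricciField glue x - ricciField glue y) (x - y) =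
      ∑ e, Ric glue x.ofLp e * (x - y).ofLp e - ∑ e, Ric glue y.ofLp e * (x - y).ofLp e := by
    rw [← Finset.sum_sub_distrib, PiLp.inner_apply]
    exact Finset.sum_congr rfl fun e _ => (mul_comm _ _).trans (sub_mul _ _ _)
  rw [hinner, sum_Ric_mul, sum_Ric_mul, sub_sub_sub_cancel_left, ← Finset.sum_sub_distrib,
    ← neg_nonneg, ← Finset.sum_neg_distrib]
  refine Finset.sum_nonneg fun σ _ => ?_
  have h := sum_dihedral_sub_mul_sub_nonneg (pullback glue x.ofLp σ) (pullback glue y.ofLp σ)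
  simp only [sub_mul, Finset.sum_sub_distrib] at h
  rw [neg_sub]
  exact h

lemma exists_Ric_eq_zero_of_bounded_flow (glue : T → Fin 6 → E) {l : ℝ → E → ℝ} {a C : ℝ}
    (hl : ∀ t, a ≤ t → HasDerivAt l (Ric glue (l t)) t) (hC : ∀ t, a ≤ t → ‖l t‖ ≤ C) :
    ∃ w, Ric glue w = 0 := by
  let L : (E → ℝ) →L[ℝ] EuclideanSpace ℝ E :=
    (PiLp.continuousLinearEquiv 2 ℝ fun _ : E => ℝ).symm
  obtain ⟨w, hw⟩ := (isDissipative_ricciField glue).exists_eq_zero_of_bounded_flow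
    (continuous_ricciField glue) (l := fun t => L (l t)) (C := ‖L‖ * C)
    (fun t ht => L.hasFDerivAt.comp_hasDerivAt t (hl t ht))
    (fun t ht => L.le_opNorm_of_le (hC t ht))
  exact ⟨w.ofLp, congrArg WithLp.ofLp hw⟩

end Ricci

/-- if there is no zero-curvature generalized decorated metric, then every
solution of the extended combinatorial Ricci flow diverges to infinity in subsequence. -/
theorem extended_ricci_flow_diverges_of_no_zero_curvature
    [Fintype T] [Fintype E] [DecidableEq E] [Nonempty T] (glue : T → Fin 6 → E)
    (hno : ¬∃ l : E → ℝ, ∀ e : E, Ric glue l e = 0)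
    (l : ℝ → E → ℝ) (hflow : ∀ t : ℝ, 0 ≤ t → HasDerivAt l (Ric glue (l t)) t) :
    ∃ tn : ℕ → ℝ, Filter.Tendsto tn Filter.atTop Filter.atTop ∧
      Filter.Tendsto (fun n => ‖l (tn n)‖) Filter.atTop Filter.atTop := by
  refine exists_seq_tendsto_atTop_of_frequently_le (f := fun t => ‖l t‖) fun C hbdd => hno ?_
  obtain ⟨a, ha⟩ := eventually_atTop.1 hbdd
  obtain ⟨w, hw⟩ := exists_Ric_eq_zero_of_bounded_flow glue (a := max a 0)
    (fun t ht => hflow t (le_of_max_le_right ht))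
    (fun t ht => (not_le.1 (ha t (le_of_max_le_left ht))).le)
  exact ⟨w, congrFun hw⟩
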